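/- For every i ∈ I and every continuous map γ : [0,1] → D, the length of γ in (D, d[l^{(i)}]) equals the length of σᵢ ∘ γ in (S, d[l]); that is, L(γ, d[l^{(i)}]) = L(σᵢ ∘ γ, d[l]). -/

import Mathlib

noncomputable section

open Set
open scoped ENNReal

/-- The Euclidean plane `ℝ²` with the Euclidean metric. -/
abbrev E2 : Type := EuclideanSpace ℝ (Fin 2)

/-- Vertices of the fixed closed regular (equilateral) triangle of side length 1. -/
def p0 : E2 := !₂[0, 0]
def p1 : E2 := !₂[1, 0]
def p2 : E2 := !₂[1 / 2, Real.sqrt 3 / 2]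

/-- `Dtri` is the fixed closed regular triangle in `ℝ²` with edge length 1. -/
def Dtri : Set E2 := convexHull ℝ {p0, p1, p2}

/-- `V0` is the set of the three vertices of `Dtri`. -/
def V0 : Set E2 := {p0, p1, p2}

/-- The three closed edges of `Dtri`. -/
def e01 : Set E2 := segment ℝ p0 p1
def e12 : Set E2 := segment ℝ p1 p2
def e02 : Set E2 := segment ℝ p0 p2

/-- `E0` is the set of the three closed edges of `Dtri`. -/
def E0 : Set (Set E2) := {e01, e12, e02}

/-- The open edge `e° = e ∖ V₀`. -/
def eo (e : Set E2) : Set E2 := e \ V0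

/-- `Do = D°` is the interior of `Dtri` in `ℝ²`. -/
def Do : Set E2 := interior Dtri

/-- `l : E₀ → ℝ` is positive and satisfies the strict triangle inequalities:
`l e₁ + l e₂ > l e₃` whenever `{e₁, e₂, e₃} = E₀`. -/
def TriIneq (l : Set E2 → ℝ) : Prop :=
  (∀ e ∈ E0, 0 < l e) ∧
  ∀ e₁ e₂ e₃ : Set E2, ({e₁, e₂, e₃} : Set (Set E2)) = E0 → l e₁ + l e₂ > l e₃

/-- A linear map `f : ℝ² → ℝ²` realizes the edge lengths `l`, i.e. for each `e ∈ E₀`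
the segment `f(e)` has Euclidean length `l e`. -/
def Realizes (f : E2 →ₗ[ℝ] E2) (l : Set E2 → ℝ) : Prop :=
  dist (f p0) (f p1) = l e01 ∧ dist (f p1) (f p2) = l e12 ∧ dist (f p0) (f p2) = l e02

/-- The metric `d[l]` on `Dtri`, defined by `d[l](x,y) = |f x - f y|₂` for a linear map `f`
realizing the edge lengths `l` (this is independent of the choice of `f`). -/
def dD (l : Set E2 → ℝ) (x y : E2) : ℝ :=
  letI := Classical.propDecidable (∃ f : E2 →ₗ[ℝ] E2, Realizes f l)
  if h : ∃ f : E2 →ₗ[ℝ] E2, Realizes f l then dist (h.choose x) (h.choose y) else 0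

/-- A triangulation `T = (σᵢ)_{i ∈ I}`, `I = Fin n`, of a topological space `S`:
a finite family of continuous maps `σᵢ : Dtri → S` such that
(a) `σᵢ` is injective on each open edge, (b) `σᵢ` is injective on `D°`,
(c) `S` is the disjoint union of `⋃ᵢ σᵢ(V₀)`, the sets `σᵢ(D°)`, and the distinct sets
among the `σᵢ(e°)`, and (d) glued edges are identified by a linear homeomorphism. -/
structure Triangulation (S : Type) [TopologicalSpace S] (n : ℕ) where
  σ : Fin n → E2 → S
  continuousOn : ∀ i, ContinuousOn (σ i) Dtri
  inj_edge : ∀ i, ∀ e ∈ E0, InjOn (σ i) (eo e)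
  inj_int : ∀ i, InjOn (σ i) Do
  cover : (⋃ i, σ i '' V0) ∪ (⋃ i, σ i '' Do) ∪ (⋃ i, ⋃ e ∈ E0, σ i '' eo e) = univ
  disj_int : ∀ i j, i ≠ j → Disjoint (σ i '' Do) (σ j '' Do)
  disj_vert_int : ∀ j, Disjoint (⋃ i, σ i '' V0) (σ j '' Do)
  disj_vert_edge : ∀ j, ∀ e ∈ E0, Disjoint (⋃ i, σ i '' V0) (σ j '' eo e)
  disj_int_edge : ∀ i j, ∀ e ∈ E0, Disjoint (σ i '' Do) (σ j '' eo e)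
  edge_eq_or_disjoint : ∀ i j, ∀ e ∈ E0, ∀ e' ∈ E0,
    σ i '' eo e = σ j '' eo e' ∨ Disjoint (σ i '' eo e) (σ j '' eo e')
  glue : ∀ i j, ∀ e ∈ E0, ∀ e' ∈ E0, σ i '' eo e = σ j '' eo e' →
    ∃ A : E2 →ᵃ[ℝ] E2, A '' e = e' ∧ ∀ x ∈ e, σ j (A x) = σ i x

variable {S : Type} [TopologicalSpace S] {n : ℕ}

/-- `l ∈ ℝ^{E(T)}_Δ`: `l` assigns positive lengths to the edges of `T` satisfying the
strict triangle inequalities in each triangle. -/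
def TriIneqT (T : Triangulation S n) (l : Set S → ℝ) : Prop :=
  (∀ (i : Fin n), ∀ e ∈ E0, 0 < l (T.σ i '' e)) ∧
  ∀ (i : Fin n), ∀ e₁ e₂ e₃ : Set E2, ({e₁, e₂, e₃} : Set (Set E2)) = E0 →
    l (T.σ i '' e₁) + l (T.σ i '' e₂) > l (T.σ i '' e₃)

/-- The restricted edge lengths `l^{(i)}` on the triangle `σᵢ(D)`: `l^{(i)}_e = l_{σᵢ(e)}`. -/
def lRes (T : Triangulation S n) (l : Set S → ℝ) (i : Fin n) : Set E2 → ℝ :=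
  fun e => l (T.σ i '' e)

/-- `dᵢ(x,y) = min { d[l^{(i)}](x',y') : x' ∈ σᵢ⁻¹(x), y' ∈ σᵢ⁻¹(y) }` for `x, y ∈ σᵢ(D)`. -/
def dTri (T : Triangulation S n) (l : Set S → ℝ) (i : Fin n) (x y : S) : ℝ :=
  sInf { r | ∃ x' ∈ Dtri, ∃ y' ∈ Dtri,
    T.σ i x' = x ∧ T.σ i y' = y ∧ r = dD (lRes T l i) x' y' }

/-- The set of sums `Σ_j d_{i_j}(x_{j-1}, x_j)` over chains from `x` to `y`. -/
def chainSums (T : Triangulation S n) (l : Set S → ℝ) (x y : S) : Set ℝ :=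
  { r | ∃ (k : ℕ) (c : ℕ → S) (idx : ℕ → Fin n),
      c 0 = x ∧ c k = y ∧
      (∀ j < k, c j ∈ T.σ (idx j) '' Dtri ∧ c (j + 1) ∈ T.σ (idx j) '' Dtri) ∧
      r = ∑ j ∈ Finset.range k, dTri T l (idx j) (c j) (c (j + 1)) }

/-- The glued metric `d[l]` on `S`. -/
def dGlue (T : Triangulation S n) (l : Set S → ℝ) (x y : S) : ℝ :=
  sInf (chainSums T l x y)

/-- The length `L(γ, d)` of a curve `γ : [0,1] → X` with respect to a metric `d`:
`L(γ,d) = sup { Σ_j d(γ t_{j-1}, γ t_j) : 0 = t₀ < t₁ < ... < t_k = 1 }`, valued in `[0,∞]`. -/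
def pathLen {X : Type} (d : X → X → ℝ) (γ : ℝ → X) : ℝ≥0∞ :=
  ⨆ (k : ℕ) (t : Fin (k + 1) → ℝ) (_ : StrictMono t ∧ t 0 = 0 ∧ t (Fin.last k) = 1),
    ENNReal.ofReal (∑ j : Fin k, d (γ (t j.castSucc)) (γ (t j.succ)))

/-!
Since every point of `S` has finitely many preimages, a chain in `S` that is short compared with
the distances from the preimages of its starting point to the edges and vertices not containing
them can be developed, link by link, into one straight segment in the triangle containing its
endpoint. Hence every point `x` of the triangle `i` has a radius within which `d[l]` pulls back
under `σᵢ` to `d[l^{(i)}]`. This radius is not uniform in `x`, but with one endpoint fixed at `x`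
it suffices for a Cousin-type argument along the curve, which gives one inequality between the
lengths; the other one is `d[l] ≤ d[l^{(i)}]`.
-/

open scoped Topology

theorem range_vecCons_vecCons_vecCons_empty {α : Type*} (x y z : α) :
    range ![x, y, z] = {x, y, z} := by
  rw [Matrix.range_cons, Matrix.range_cons_cons_empty, singleton_union]

section Affine

variable {k V W P Q : Type*} [AddCommGroup V] [AddTorsor V P] [AddCommGroup W] [AddTorsor W Q]

theorem exists_affineMap_apply_eq [Ring k] [Module k V] [Module k W] {ι : Type*}
    (b : AffineBasis ι k P) (q : ι → Q) : ∃ f : P →ᵃ[k] Q, ∀ i, f (b i) = q i := by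
  classical
  obtain ⟨i₀⟩ := b.nonempty
  let L : V →ₗ[k] W := (b.basisOf i₀).constr ℕ fun j ↦ q j -ᵥ q i₀
  have hL : ∀ j, L (b j -ᵥ b i₀) = q j -ᵥ q i₀ := fun j ↦ by
    rcases eq_or_ne j i₀ with rfl | hj
    · simp
    · simpa [L] using (b.basisOf i₀).constr_basis ℕ (fun j ↦ q j -ᵥ q i₀) ⟨j, hj⟩
  exact ⟨AffineMap.mk (fun x ↦ L (x -ᵥ b i₀) +ᵥ q i₀) L fun x v ↦ by
    rw [vadd_vsub_assoc, map_add, add_vadd], fun j ↦ by simp [hL]⟩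

theorem surjective_of_not_collinear [DivisionRing k] [Module k V] [Module k W]
    (hW : Module.finrank k W = 2) {f : V →ₗ[k] W} {x y z : V}
    (h : ¬Collinear k {f x, f y, f z}) : Function.Surjective f := by
  have : FiniteDimensional k W := .of_finrank_pos (by omega)
  have hind : AffineIndependent k ![f x, f y, f z] := affineIndependent_iff_not_collinear_set.2 h
  have hspan := hind.vectorSpan_eq_top_of_card_eq_finrank_add_one (by simp [hW])
  rw [← LinearMap.range_eq_top, eq_top_iff, ← hspan]
  have himage : range ![f x, f y, f z] = f.toAffineMap '' {x, y, z} := by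
    simp only [range_vecCons_vecCons_vecCons_empty, image_insert_eq, image_singleton,
      LinearMap.coe_toAffineMap]
  rw [himage, ← AffineMap.map_vectorSpan]
  exact LinearMap.map_le_range

end Affine

section Metric

open Metric

section Seminormed

variable {V W P : Type*} [AddCommGroup V] [Module ℝ V]
  [SeminormedAddCommGroup W] [NormedSpace ℝ W]

theorem diam_segment (x y : W) : diam (segment ℝ x y) = dist x y := by
  rw [← convexHull_pair, convexHull_diam, diam_pair]

theorem dist_map_eq_of_diam_image_segment_eq {f g : V →ᵃ[ℝ] W} {a b x y : V}
    (h : diam (f '' segment ℝ a b) = diam (g '' segment ℝ a b))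
    (hx : x ∈ segment ℝ a b) (hy : y ∈ segment ℝ a b) : dist (f x) (f y) = dist (g x) (g y) := by
  simp only [image_segment, diam_segment] at h
  rw [segment_eq_image_lineMap] at hx hy
  obtain ⟨s, -, rfl⟩ := hx
  obtain ⟨t, -, rfl⟩ := hy
  simp only [AffineMap.apply_lineMap, dist_lineMap_lineMap, h]

theorem not_collinear_of_dist_lt [PseudoMetricSpace P] [NormedAddTorsor W P] {x y z : P}
    (hxz : dist x z < dist x y + dist y z) (hyx : dist x y < dist y z + dist x z)
    (hzy : dist y z < dist x y + dist x z) : ¬Collinear ℝ {x, y, z} := by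
  intro h
  rcases h.wbtw_or_wbtw_or_wbtw with h | h | h <;>
    linarith [h.dist_add_dist, dist_comm x y, dist_comm x z, dist_comm y z]

end Seminormed

variable {V : Type*} [NormedAddCommGroup V] [NormedSpace ℝ V]

theorem exists_norm_eq_and_norm_eq_and_dist_eq (hV : 1 < Module.rank ℝ V) {a b c : ℝ} (ha : 0 ≤ a)
    (hb : 0 ≤ b) (hc : c ∈ Icc |a - b| (a + b)) : ∃ u v : V, ‖u‖ = a ∧ ‖v‖ = b ∧ dist u v = c := by
  have : Nontrivial V := (rank_pos_iff_nontrivial (R := ℝ)).1 (zero_lt_one.trans hV)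
  obtain ⟨e, he⟩ := exists_norm_eq V zero_le_one
  have hsphere : ∀ r : ℝ, |r| = b → r • e ∈ sphere (0 : V) b := fun r hr ↦ by
    rw [mem_sphere_zero_iff_norm, norm_smul, he, mul_one, Real.norm_eq_abs, hr]
  have hdist : ∀ r : ℝ, dist (a • e) (r • e) = |a - r| := fun r ↦ by
    rw [dist_eq_norm, ← sub_smul, norm_smul, he, mul_one, Real.norm_eq_abs]
  have hivt := (isPreconnected_sphere hV 0 b).intermediate_value
    (hsphere b (abs_of_nonneg hb)) (hsphere (-b) (by rw [abs_neg, abs_of_nonneg hb]))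
    (f := dist (a • e)) (by fun_prop)
  rw [hdist, hdist, sub_neg_eq_add, abs_of_nonneg (add_nonneg ha hb)] at hivt
  obtain ⟨v, hv, hvc⟩ := hivt hc
  exact ⟨a • e, v, by rw [norm_smul, he, mul_one, Real.norm_of_nonneg ha],
    mem_sphere_zero_iff_norm.1 hv, hvc⟩

theorem mem_interior_convexHull_or_exists_mem_convexHull_image_compl {ι : Type*} [Finite ι]
    (b : AffineBasis ι ℝ V) {x : V} (hx : x ∈ convexHull ℝ (range b)) :
    x ∈ interior (convexHull ℝ (range b)) ∨ ∃ i, x ∈ convexHull ℝ (b '' {i}ᶜ) := by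
  classical
  have := Fintype.ofFinite ι
  rw [b.interior_convexHull, or_iff_not_imp_left]
  rw [b.convexHull_eq_nonneg_coord] at hx
  intro hx'
  obtain ⟨i, hi⟩ : ∃ i, b.coord i x ≤ 0 := by simpa using hx'
  have hi : b.coord i x = 0 := hi.antisymm (hx i)
  refine ⟨i, ?_⟩
  have hsum := b.sum_coord_apply_eq_one x
  have hcomb := b.linear_combination_coord_eq_self x
  rw [← Finset.add_sum_erase _ _ (Finset.mem_univ i), hi] at hsum hcomb
  rw [zero_add] at hsum
  rw [zero_smul, zero_add] at hcomb
  rw [← hcomb]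
  exact (convex_convexHull ℝ _).sum_mem (fun j _ ↦ hx j) hsum fun j hj ↦
    subset_convexHull ℝ _ (mem_image_of_mem b (Finset.ne_of_mem_erase hj))

end Metric

section Triangle

theorem not_collinear_p0_p1_p2 : ¬Collinear ℝ {p0, p1, p2} := by
  rw [collinear_iff_of_mem (mem_insert p0 _)]
  rintro ⟨v, hv⟩
  obtain ⟨r, hr⟩ := hv p1 (by simp)
  obtain ⟨s, hs⟩ := hv p2 (by simp)
  have hr0 : 1 = r * v 0 := by simpa [p0, p1] using congr_fun (congr_arg WithLp.ofLp hr) 0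
  have hr1 : 0 = r * v 1 := by simpa [p0, p1] using congr_fun (congr_arg WithLp.ofLp hr) 1
  have hs1 : √3 / 2 = s * v 1 := by simpa [p0, p2] using congr_fun (congr_arg WithLp.ofLp hs) 1
  rcases mul_eq_zero.1 hr1.symm with hr | hv
  · simp [hr] at hr0
  · simp [hv] at hs1

/-- The vertices of `Dtri` as an affine basis of the plane, which gives barycentric coordinates on
`Dtri` and affine maps with prescribed values at its vertices. -/
def triangleBasis : AffineBasis (Fin 3) ℝ E2 where
  toFun := ![p0, p1, p2]
  ind' := affineIndependent_iff_not_collinear_set.2 not_collinear_p0_p1_p2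
  tot' := (affineIndependent_iff_not_collinear_set.2
    not_collinear_p0_p1_p2).affineSpan_eq_top_iff_card_eq_finrank_add_one.2 (by simp)

theorem range_triangleBasis : range triangleBasis = {p0, p1, p2} :=
  range_vecCons_vecCons_vecCons_empty p0 p1 p2

theorem V0_finite : V0.Finite := by simp [V0]

theorem E0_finite : E0.Finite := by simp [E0]

theorem V0_subset_Dtri : V0 ⊆ Dtri :=
  subset_convexHull ℝ _

theorem exists_eq_segment {e : Set E2} (he : e ∈ E0) : ∃ a ∈ V0, ∃ b ∈ V0, e = segment ℝ a b := by
  rcases he with rfl | rfl | rfl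
  exacts [⟨p0, by simp [V0], p1, by simp [V0], rfl⟩, ⟨p1, by simp [V0], p2, by simp [V0], rfl⟩,
    ⟨p0, by simp [V0], p2, by simp [V0], rfl⟩]

theorem subset_Dtri_of_mem_E0 {e : Set E2} (he : e ∈ E0) : e ⊆ Dtri := by
  obtain ⟨a, ha, b, hb, rfl⟩ := exists_eq_segment he
  exact (convex_convexHull ℝ _).segment_subset (V0_subset_Dtri ha) (V0_subset_Dtri hb)

theorem isClosed_of_mem_E0 {e : Set E2} (he : e ∈ E0) : IsClosed e := by
  obtain ⟨a, -, b, -, rfl⟩ := exists_eq_segment he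
  rw [← convexHull_pair]
  exact ((toFinite {a, b}).isCompact_convexHull ℝ).isClosed

theorem convexHull_triangleBasis_image_compl_mem_E0 (i : Fin 3) :
    convexHull ℝ (triangleBasis '' {i}ᶜ) ∈ E0 := by
  have h : ∀ j k, ({i}ᶜ : Set (Fin 3)) = {j, k} → convexHull ℝ (triangleBasis '' {i}ᶜ) =
      segment ℝ (triangleBasis j) (triangleBasis k) := fun j k h ↦ by
    rw [h, image_pair, convexHull_pair]
  fin_cases i
  · exact .inr (.inl (h 1 2 (by ext j; fin_cases j <;> simp)))
  · exact .inr (.inr (h 0 2 (by ext j; fin_cases j <;> simp)))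
  · exact .inl (h 0 1 (by ext j; fin_cases j <;> simp))

theorem mem_V0_or_mem_Do_or_exists_mem_eo {x : E2} (hx : x ∈ Dtri) :
    x ∈ V0 ∨ x ∈ Do ∨ ∃ e ∈ E0, x ∈ eo e := by
  by_cases hV : x ∈ V0
  · exact .inl hV
  rw [Dtri, ← range_triangleBasis] at hx
  rw [Do, Dtri, ← range_triangleBasis]
  rcases mem_interior_convexHull_or_exists_mem_convexHull_image_compl _ hx with h | ⟨i, hi⟩
  · exact .inr (.inl h)
  · exact .inr (.inr ⟨_, convexHull_triangleBasis_image_compl_mem_E0 i, hi, hV⟩)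

/-- The closed faces of `Dtri` of dimension at most one, along which triangles are glued. Vertices
are encoded as singletons. -/
def properFaces : Set (Set E2) := E0 ∪ singleton '' V0

theorem properFaces_finite : properFaces.Finite :=
  E0_finite.union (V0_finite.image _)

theorem isClosed_of_mem_properFaces {F : Set E2} (hF : F ∈ properFaces) : IsClosed F := by
  rcases hF with he | ⟨v, -, rfl⟩
  exacts [isClosed_of_mem_E0 he, isClosed_singleton]

end Triangle

section EdgeLengths

variable {f : E2 →ₗ[ℝ] E2} {l : Set E2 → ℝ}

theorem TriIneq.lt_add (hl : TriIneq l) :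
    l e02 < l e01 + l e12 ∧ l e01 < l e12 + l e02 ∧ l e12 < l e01 + l e02 :=
  ⟨hl.2 e01 e12 e02 rfl, hl.2 e12 e02 e01 (by rw [pair_comm e02, insert_comm, E0]),
    hl.2 e01 e02 e12 (by rw [pair_comm, E0])⟩

theorem TriIneq.exists_realizes (hl : TriIneq l) : ∃ f : E2 →ₗ[ℝ] E2, Realizes f l := by
  obtain ⟨h02, h01, h12⟩ := hl.lt_add
  obtain ⟨u, v, hu, hv, huv⟩ := exists_norm_eq_and_norm_eq_and_dist_eq (V := E2)
    (Module.one_lt_rank_of_one_lt_finrank (by simp)) (hl.1 e01 (by simp [E0])).le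
    (hl.1 e02 (by simp [E0])).le (c := l e12) ⟨abs_le.2 ⟨by linarith, by linarith⟩, h12.le⟩
  obtain ⟨g, hg⟩ := exists_affineMap_apply_eq triangleBasis ![0, u, v]
  have hdist : ∀ x y, dist (g.linear x) (g.linear y) = dist (g x) (g y) := fun x y ↦ by
    rw [dist_eq_norm, dist_eq_norm, ← map_sub, ← vsub_eq_sub x y, g.linearMap_vsub, vsub_eq_sub]
  have h0 : g p0 = 0 := hg 0
  have h1 : g p1 = u := hg 1
  have h2 : g p2 = v := hg 2
  exact ⟨g.linear, by rw [hdist, h0, h1, dist_zero_left, hu], by rw [hdist, h1, h2, huv],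
    by rw [hdist, h0, h2, dist_zero_left, hv]⟩

theorem Realizes.injective (hf : Realizes f l) (hl : TriIneq l) : Function.Injective f := by
  obtain ⟨h02, h01, h12⟩ := hl.lt_add
  rw [← hf.1, ← hf.2.1, ← hf.2.2] at h02 h01 h12
  exact LinearMap.injective_iff_surjective.2
    (surjective_of_not_collinear (by simp) (not_collinear_of_dist_lt h02 h01 h12))

theorem Realizes.diam_image (hf : Realizes f l) {e : Set E2} (he : e ∈ E0) :
    Metric.diam (f '' e) = l e := by
  have h : ∀ a b, Metric.diam (f '' segment ℝ a b) = dist (f a) (f b) := fun a b ↦ by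
    rw [← f.coe_toAffineMap, image_segment, diam_segment]
  rcases he with rfl | rfl | rfl
  exacts [(h p0 p1).trans hf.1, (h p1 p2).trans hf.2.1, (h p0 p2).trans hf.2.2]

theorem exists_dD_eq_dist (l : Set E2 → ℝ) :
    ∃ f : E2 →ₗ[ℝ] E2, ∀ x y, dD l x y = dist (f x) (f y) := by
  by_cases h : ∃ f : E2 →ₗ[ℝ] E2, Realizes f l
  · exact ⟨h.choose, fun x y ↦ dif_pos h⟩
  · exact ⟨0, fun x y ↦ by simp [dD, h]⟩

theorem TriIneq.exists_realizes_dD_eq_dist (hl : TriIneq l) :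
    ∃ f : E2 →ₗ[ℝ] E2, Realizes f l ∧ ∀ x y, dD l x y = dist (f x) (f y) :=
  ⟨hl.exists_realizes.choose, hl.exists_realizes.choose_spec, fun _ _ ↦ dif_pos hl.exists_realizes⟩

theorem dD_nonneg (l : Set E2 → ℝ) (x y : E2) : 0 ≤ dD l x y := by
  obtain ⟨f, hf⟩ := exists_dD_eq_dist l
  exact hf x y ▸ dist_nonneg

theorem dD_self (l : Set E2 → ℝ) (x : E2) : dD l x x = 0 := by
  obtain ⟨f, hf⟩ := exists_dD_eq_dist l
  rw [hf, dist_self]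

theorem dD_comm (l : Set E2 → ℝ) (x y : E2) : dD l x y = dD l y x := by
  obtain ⟨f, hf⟩ := exists_dD_eq_dist l
  rw [hf, hf, dist_comm]

theorem dD_triangle (l : Set E2 → ℝ) (x y z : E2) : dD l x z ≤ dD l x y + dD l y z := by
  obtain ⟨f, hf⟩ := exists_dD_eq_dist l
  simpa only [hf] using dist_triangle (f x) (f y) (f z)

theorem continuous_dD (l : Set E2 → ℝ) (x : E2) : Continuous (dD l x) := by
  obtain ⟨f, hf⟩ := exists_dD_eq_dist l
  rw [funext (hf x)]
  exact continuous_const.dist f.continuous_of_finiteDimensional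

theorem TriIneq.eventually_mem_of_dD_lt (hl : TriIneq l) {F : Set E2} (hF : IsClosed F) (x : E2) :
    ∀ᶠ ε in 𝓝[>] 0, ∀ y ∈ F, dD l x y < ε → x ∈ F := by
  by_cases hx : x ∈ F
  · exact .of_forall fun _ _ _ _ ↦ hx
  obtain ⟨f, hf, hd⟩ := hl.exists_realizes_dD_eq_dist
  have hinj := hf.injective hl
  have hclosed : IsClosed (f '' F) :=
    (f.isClosedEmbedding_of_injective (LinearMap.ker_eq_bot.2 hinj)).isClosedMap F hF
  obtain ⟨δ, hδ, hball⟩ := Metric.isOpen_iff.1 hclosed.isOpen_compl (f x)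
    (hinj.mem_set_image.not.2 hx)
  filter_upwards [Ioo_mem_nhdsGT hδ] with ε hε y hy hxy
  refine absurd (mem_image_of_mem f hy) (hball ?_)
  rw [Metric.mem_ball, dist_comm, ← hd]
  exact hxy.trans hε.2

theorem dD_map_eq {l l' : Set E2 → ℝ} (hl : TriIneq l) (hl' : TriIneq l') {A : E2 →ᵃ[ℝ] E2}
    {e e' : Set E2} (he : e ∈ E0) (he' : e' ∈ E0) (hA : A '' e = e') (hee' : l' e' = l e)
    {x y : E2} (hx : x ∈ e) (hy : y ∈ e) : dD l' (A x) (A y) = dD l x y := by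
  obtain ⟨f, hf, hd⟩ := hl.exists_realizes_dD_eq_dist
  obtain ⟨f', hf', hd'⟩ := hl'.exists_realizes_dD_eq_dist
  have hdiam : Metric.diam (f'.toAffineMap.comp A '' e) = Metric.diam (f.toAffineMap '' e) :=
    calc Metric.diam (f'.toAffineMap.comp A '' e) = Metric.diam (f' '' e') := by
          rw [← hA, image_image]; rfl
      _ = Metric.diam (f '' e) := by rw [hf'.diam_image he', hf.diam_image he, hee']
  rw [hd, hd']
  obtain ⟨a, -, b, -, rfl⟩ := exists_eq_segment he
  exact dist_map_eq_of_diam_image_segment_eq hdiam hx hy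

end EdgeLengths

section PathLength

open Filter

/-- `IsPartitionSum d s t c`: there are `s = t₀ < t₁ < ⋯ < tₖ = t` with `c = ∑ j, d tⱼ₋₁ tⱼ`.
Building partitions one point at a time makes concatenation an induction. -/
inductive IsPartitionSum {α M : Type*} [LT α] [AddMonoid M] (d : α → α → M) (s : α) : α → M → Prop
  | nil : IsPartitionSum d s s 0
  | snoc {r t : α} {c : M} : IsPartitionSum d s r c → r < t → IsPartitionSum d s t (c + d r t)

namespace IsPartitionSum

variable {α M : Type*} {s r t : α}

theorem le [Preorder α] [AddMonoid M] {d : α → α → M} {c : M} (h : IsPartitionSum d s t c) :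
    s ≤ t := by
  induction h with
  | nil => exact le_rfl
  | snoc _ hlt ih => exact ih.trans hlt.le

theorem append [LT α] [AddMonoid M] {d : α → α → M} {c c' : M} (h : IsPartitionSum d s r c)
    (h' : IsPartitionSum d r t c') : IsPartitionSum d s t (c + c') := by
  induction h' with
  | nil => rwa [add_zero]
  | snoc _ hlt ih => rw [← add_assoc]; exact ih.snoc hlt

section Comparison

variable [ConditionallyCompleteLinearOrder α] [DenselyOrdered α] [TopologicalSpace α]
  [OrderTopology α] [AddMonoid M] [Preorder M] [AddLeftMono M] [AddRightMono M] {D d : α → α → M}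

/-- Cousin's argument: the supremum of the points of `[s, t]` up to which the conclusion holds
is tagged by a neighbourhood, which carries the conclusion to the supremum and beyond it. -/
theorem exists_le_of_eventually_le (hself : ∀ x, D x x ≤ 0)
    (htri : ∀ x y z, D x z ≤ D x y + D y z) (hst : s ≤ t)
    (hloc : ∀ x ∈ Icc s t, ∀ᶠ y in 𝓝[Icc s t] x, D x y ≤ d x y ∧ D y x ≤ d y x) :
    ∃ c, D s t ≤ c ∧ IsPartitionSum d s t c := by
  let A : Set α := {x | x ∈ Icc s t ∧ ∃ c, D s x ≤ c ∧ IsPartitionSum d s x c}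
  have hextend : ∀ x ∈ A, ∀ y ∈ Icc s t, x < y → D x y ≤ d x y → y ∈ A := by
    rintro x ⟨-, c, hc, hp⟩ y hy hxy h
    exact ⟨hy, c + d x y, (htri s x y).trans (add_le_add hc h), hp.snoc hxy⟩
  have hA : A.Nonempty := ⟨s, ⟨le_rfl, hst⟩, 0, hself s, .nil⟩
  have hlub : IsLUB A (sSup A) := isLUB_csSup hA ⟨t, fun x hx ↦ hx.1.2⟩
  set m := sSup A
  have hmI : m ∈ Icc s t :=
    ⟨hlub.1 ⟨⟨le_rfl, hst⟩, 0, hself s, .nil⟩, hlub.2 fun x hx ↦ hx.1.2⟩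
  have hlocm (u : Set α) : ∀ᶠ x in 𝓝[u] m, x ∈ Icc s t → D m x ≤ d m x ∧ D x m ≤ d x m :=
    (eventually_nhdsWithin_iff.1 (hloc m hmI)).filter_mono nhdsWithin_le_nhds
  have hmA : m ∈ A := by
    obtain ⟨x, hxA, hx⟩ := ((hlub.frequently_mem hA).and_eventually (hlocm _)).exists
    rcases (hlub.1 hxA).eq_or_lt with rfl | hxm
    exacts [hxA, hextend x hxA m hmI hxm (hx hxA.1).2]
  rcases hmI.2.eq_or_lt with hmt | hmt
  · exact hmt ▸ hmA.2
  · have : (𝓝[>] m).NeBot := nhdsGT_neBot_of_exists_gt ⟨t, hmt⟩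
    obtain ⟨x, hx, hmx, hxt⟩ := ((hlocm _).and (Ioo_mem_nhdsGT hmt)).exists
    have hxI : x ∈ Icc s t := ⟨hmI.1.trans hmx.le, hxt.le⟩
    exact absurd (hlub.1 (hextend m hmA x hxI hmx (hx hxI).1)) hmx.not_ge

theorem exists_ge_of_eventually_le (hself : ∀ x, D x x ≤ 0)
    (htri : ∀ x y z, D x z ≤ D x y + D y z)
    (hloc : ∀ x ∈ Icc s t, ∀ᶠ y in 𝓝[Icc s t] x, D x y ≤ d x y ∧ D y x ≤ d y x) {C : M}
    (hC : IsPartitionSum D s t C) : ∃ c, C ≤ c ∧ IsPartitionSum d s t c := by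
  induction hC with
  | nil => exact ⟨0, le_rfl, .nil⟩
  | @snoc r t C hC hlt ih =>
    have hsub {u v : α} (h : Icc u v ⊆ Icc s t) (x) (hx : x ∈ Icc u v) :=
      (hloc x (h hx)).filter_mono (nhdsWithin_mono x h)
    obtain ⟨c, hc, hp⟩ := ih (hsub (Icc_subset_Icc_right hlt.le))
    obtain ⟨c', hc', hp'⟩ :=
      exists_le_of_eventually_le hself htri hlt.le (hsub (Icc_subset_Icc_left hC.le))
    exact ⟨c + c', add_le_add hc hc', hp.append hp'⟩

end Comparison

theorem exists_strictMono [Preorder α] [AddCommMonoid M] {d : α → α → M} {c : M}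
    (h : IsPartitionSum d s t c) :
    ∃ (k : ℕ) (τ : Fin (k + 1) → α), (StrictMono τ ∧ τ 0 = s ∧ τ (Fin.last k) = t) ∧
      ∑ j : Fin k, d (τ j.castSucc) (τ j.succ) = c := by
  induction h with
  | nil => exact ⟨0, fun _ ↦ s, ⟨Fin.strictMono_iff_lt_succ.2 finZeroElim, rfl, rfl⟩, by simp⟩
  | @snoc r t c _ hlt ih =>
    obtain ⟨k, τ, ⟨hτ, h0, hlast⟩, rfl⟩ := ih
    have hcast : ∀ j, Fin.snoc (α := fun _ ↦ α) τ t (Fin.castSucc j) = τ j := fun j ↦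
      Fin.snoc_castSucc (α := fun _ ↦ α) t τ j
    have hend : Fin.snoc (α := fun _ ↦ α) τ t (Fin.last (k + 1)) = t :=
      Fin.snoc_last (α := fun _ ↦ α) t τ
    refine ⟨k + 1, Fin.snoc (α := fun _ ↦ α) τ t, ⟨Fin.strictMono_iff_lt_succ.2 fun j ↦ ?_,
      (hcast 0).trans h0, hend⟩, ?_⟩
    · cases j using Fin.lastCases with
      | last => rwa [hcast, Fin.succ_last, hend, hlast]
      | cast j =>
        rw [hcast, Fin.succ_castSucc, hcast]
        exact hτ Fin.castSucc_lt_succ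
    · simp only [Fin.sum_univ_castSucc, Fin.succ_castSucc, Fin.succ_last, hcast, hend, hlast]

theorem of_strictMono [Preorder α] [AddCommMonoid M] (d : α → α → M) {k : ℕ} {τ : Fin (k + 1) → α}
    (hτ : StrictMono τ) : IsPartitionSum d (τ 0) (τ (Fin.last k))
      (∑ j : Fin k, d (τ j.castSucc) (τ j.succ)) := by
  induction k with
  | zero => simpa using nil
  | succ k ih =>
    rw [Fin.sum_univ_castSucc, ← Fin.succ_last]
    exact (ih (hτ.comp Fin.strictMono_castSucc)).snoc (hτ Fin.castSucc_lt_succ)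

end IsPartitionSum

variable {X Y : Type} {D : X → X → ℝ} {d : Y → Y → ℝ} {γ : ℝ → X} {δ : ℝ → Y}

theorem pathLen_eq_iSup_isPartitionSum (d : Y → Y → ℝ) (δ : ℝ → Y) :
    pathLen d δ = ⨆ (c) (_ : IsPartitionSum (fun s t ↦ d (δ s) (δ t)) 0 1 c), .ofReal c := by
  refine le_antisymm (iSup_le fun k ↦ iSup₂_le fun τ hτ ↦ ?_) (iSup₂_le fun c hc ↦ ?_)
  · refine le_iSup₂_of_le _ ?_ le_rfl
    simpa only [hτ.2.1, hτ.2.2] using IsPartitionSum.of_strictMono (fun s t ↦ d (δ s) (δ t)) hτ.1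
  · obtain ⟨k, τ, hτ, rfl⟩ := hc.exists_strictMono
    exact le_iSup_of_le k (le_iSup₂_of_le τ hτ le_rfl)

theorem pathLen_mono
    (h : ∀ s ∈ Icc (0 : ℝ) 1, ∀ t ∈ Icc (0 : ℝ) 1, D (γ s) (γ t) ≤ d (δ s) (δ t)) :
    pathLen D γ ≤ pathLen d δ := by
  refine iSup_mono fun k ↦ iSup₂_mono fun τ ⟨hτ, h0, h1⟩ ↦ ENNReal.ofReal_le_ofReal ?_
  have hmem : ∀ j, τ j ∈ Icc (0 : ℝ) 1 := fun j ↦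
    ⟨h0 ▸ hτ.monotone (Fin.zero_le j), h1 ▸ hτ.monotone (Fin.le_last j)⟩
  exact Finset.sum_le_sum fun j _ ↦ h _ (hmem _) _ (hmem _)

theorem pathLen_le_of_eventually_le (hself : ∀ x, D x x ≤ 0)
    (htri : ∀ x y z, D x z ≤ D x y + D y z)
    (hloc : ∀ s ∈ Icc (0 : ℝ) 1, ∀ᶠ t in 𝓝[Icc 0 1] s,
      D (γ s) (γ t) ≤ d (δ s) (δ t) ∧ D (γ t) (γ s) ≤ d (δ t) (δ s)) :
    pathLen D γ ≤ pathLen d δ := by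
  simp only [pathLen_eq_iSup_isPartitionSum]
  refine iSup₂_le fun C hC ↦ ?_
  obtain ⟨c, hc, hp⟩ := IsPartitionSum.exists_ge_of_eventually_le (fun s ↦ hself (γ s))
    (fun r s t ↦ htri (γ r) (γ s) (γ t)) hloc hC
  exact le_iSup₂_of_le c hp (ENNReal.ofReal_le_ofReal hc)

end PathLength

section Gluing

variable (T : Triangulation S n) (l : Set S → ℝ) {j k : Fin n} {p q x : E2} {y z : S}

namespace Triangulation

theorem finite_fiber (k : Fin n) (z : S) : {x | x ∈ Dtri ∧ T.σ k x = z}.Finite := by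
  have hfiber {U : Set E2} (hU : InjOn (T.σ k) U) : {x | x ∈ U ∧ T.σ k x = z}.Finite :=
    Set.Subsingleton.finite fun x hx y hy ↦ hU hx.1 hy.1 (hx.2.trans hy.2.symm)
  refine (V0_finite.union ((hfiber (T.inj_int k)).union
    (E0_finite.biUnion fun e he ↦ hfiber (T.inj_edge k e he)))).subset fun x ⟨hx, hxz⟩ ↦ ?_
  rcases mem_V0_or_mem_Do_or_exists_mem_eo hx with hV | hD | ⟨e, he, hxe⟩
  exacts [.inl hV, .inr (.inl ⟨hD, hxz⟩), .inr (.inr (mem_biUnion he ⟨hxe, hxz⟩))]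

variable {T}

theorem σ_ne_of_mem_V0_of_mem_eo {e : Set E2} (he : e ∈ E0) (hp : p ∈ V0) (hq : q ∈ eo e) :
    T.σ j p ≠ T.σ k q :=
  (T.disj_vert_edge k e he).ne_of_mem (mem_iUnion_of_mem j (mem_image_of_mem _ hp))
    (mem_image_of_mem _ hq)

theorem eq_and_eq_of_mem_Do (hq : q ∈ Do) (hp : p ∈ Dtri) (h : T.σ k q = T.σ j p) :
    k = j ∧ q = p := by
  have hqk := mem_image_of_mem (T.σ k) hq
  rcases mem_V0_or_mem_Do_or_exists_mem_eo hp with hV | hD | ⟨e, he, hpe⟩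
  · exact absurd h.symm ((T.disj_vert_int k).ne_of_mem
      (mem_iUnion_of_mem j (mem_image_of_mem _ hV)) hqk)
  · obtain rfl : k = j := by
      by_contra hkj
      exact (T.disj_int k j hkj).ne_of_mem hqk (mem_image_of_mem _ hD) h
    exact ⟨rfl, T.inj_int k hq hD h⟩
  · exact absurd h ((T.disj_int_edge k j e he).ne_of_mem hqk (mem_image_of_mem _ hpe))

theorem exists_affineMap_of_mem_eo {e : Set E2} (he : e ∈ E0) (hq : q ∈ eo e) (hp : p ∈ Dtri)
    (h : T.σ k q = T.σ j p) :
    ∃ e' ∈ E0, ∃ A : E2 →ᵃ[ℝ] E2, A '' e = e' ∧ (∀ x ∈ e, T.σ j (A x) = T.σ k x) ∧ A q = p := by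
  have hqk := mem_image_of_mem (T.σ k) hq
  rcases mem_V0_or_mem_Do_or_exists_mem_eo hp with hV | hD | ⟨e', he', hpe⟩
  · exact absurd h.symm (σ_ne_of_mem_V0_of_mem_eo he hV hq)
  · exact absurd h.symm
      ((T.disj_int_edge j k e he).ne_of_mem (mem_image_of_mem _ hD) hqk)
  · have heq := (T.edge_eq_or_disjoint k j e he e' he').resolve_right fun hdisj ↦
      hdisj.ne_of_mem hqk (mem_image_of_mem _ hpe) h
    obtain ⟨A, hA, hσ⟩ := T.glue k j e he e' he' heq
    have hAq : A q ∈ eo e' := ⟨hA ▸ mem_image_of_mem A hq.1, fun hV ↦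
      σ_ne_of_mem_V0_of_mem_eo he hV hq (hσ q hq.1)⟩
    exact ⟨e', he', A, hA, hσ, T.inj_edge j e' he' hAq hpe ((hσ q hq.1).trans h)⟩

end Triangulation

variable {T l}

theorem TriIneqT.triIneq_lRes (hl : TriIneqT T l) (k : Fin n) : TriIneq (lRes T l k) :=
  ⟨hl.1 k, hl.2 k⟩

theorem TriIneqT.exists_dD_eq_of_σ_eq (hl : TriIneqT T l) (hx : x ∈ Dtri) (hq : q ∈ Dtri)
    (hp : p ∈ Dtri) (h : T.σ k q = T.σ j p) (hface : ∀ F ∈ properFaces, q ∈ F → x ∈ F) :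
    ∃ x' ∈ Dtri, T.σ j x' = T.σ k x ∧ dD (lRes T l j) x' p = dD (lRes T l k) x q := by
  rcases mem_V0_or_mem_Do_or_exists_mem_eo hq with hV | hD | ⟨e, he, hqe⟩
  · obtain rfl : x = q := hface {q} (.inr (mem_image_of_mem _ hV)) rfl
    exact ⟨p, hp, h.symm, by rw [dD_self, dD_self]⟩
  · obtain ⟨rfl, rfl⟩ := T.eq_and_eq_of_mem_Do hD hp h
    exact ⟨x, hx, rfl, rfl⟩
  · obtain ⟨e', he', A, hA, hσ, rfl⟩ := T.exists_affineMap_of_mem_eo he hqe hp h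
    have hxe : x ∈ e := hface e (.inl he) hqe.1
    have hlen : lRes T l j e' = lRes T l k e := by
      rw [lRes, lRes, ← hA, image_image, image_congr hσ]
    exact ⟨A x, subset_Dtri_of_mem_E0 he' (hA ▸ mem_image_of_mem A hxe), hσ x hxe,
      dD_map_eq (hl.triIneq_lRes k) (hl.triIneq_lRes j) he he' hA hlen hxe hqe.1⟩

theorem TriIneqT.exists_pos_forall_mem_of_dD_lt (hl : TriIneqT T l) {𝓕 : Set (Set E2)}
    (h𝓕 : 𝓕.Finite) (hclosed : ∀ F ∈ 𝓕, IsClosed F) (z : S) :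
    ∃ ε > 0, ∀ k, ∀ x, x ∈ Dtri ∧ T.σ k x = z → ∀ F ∈ 𝓕, ∀ q ∈ F,
      dD (lRes T l k) x q < ε → x ∈ F := by
  have h : ∀ᶠ ε in 𝓝[>] (0 : ℝ), ∀ k, ∀ x ∈ {x | x ∈ Dtri ∧ T.σ k x = z}, ∀ F ∈ 𝓕, ∀ q ∈ F,
      dD (lRes T l k) x q < ε → x ∈ F := by
    simp only [Filter.eventually_all, (T.finite_fiber _ z).eventually_all, h𝓕.eventually_all]
    exact fun k x _ F hF ↦ (hl.triIneq_lRes k).eventually_mem_of_dD_lt (hclosed F hF) x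
  obtain ⟨ε, hε, hpos⟩ := (h.and self_mem_nhdsWithin).exists
  exact ⟨ε, hpos, hε⟩

theorem dTri_comm (j : Fin n) (y z : S) : dTri T l j y z = dTri T l j z y := by
  have h (y z : S) : {r | ∃ y' ∈ Dtri, ∃ z' ∈ Dtri,
        T.σ j y' = y ∧ T.σ j z' = z ∧ r = dD (lRes T l j) y' z'} ⊆
      {r | ∃ z' ∈ Dtri, ∃ y' ∈ Dtri,
        T.σ j z' = z ∧ T.σ j y' = y ∧ r = dD (lRes T l j) z' y'} := by
    rintro _ ⟨y', hy', z', hz', hy, hz, rfl⟩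
    exact ⟨z', hz', y', hy', hz, hy, dD_comm ..⟩
  exact congr_arg sInf ((h y z).antisymm (h z y))

theorem dTri_nonneg (j : Fin n) (y z : S) : 0 ≤ dTri T l j y z :=
  Real.sInf_nonneg (by rintro _ ⟨y', -, z', -, -, -, rfl⟩; exact dD_nonneg ..)

theorem dTri_le_dD (hp : p ∈ Dtri) (hq : q ∈ Dtri) :
    dTri T l j (T.σ j p) (T.σ j q) ≤ dD (lRes T l j) p q :=
  csInf_le ⟨0, by rintro _ ⟨y', -, z', -, -, -, rfl⟩; exact dD_nonneg ..⟩
    ⟨p, hp, q, hq, rfl, rfl, rfl⟩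

theorem exists_dTri_eq_dD (hy : y ∈ T.σ j '' Dtri) (hz : z ∈ T.σ j '' Dtri) :
    ∃ p ∈ Dtri, ∃ q ∈ Dtri, T.σ j p = y ∧ T.σ j q = z ∧
      dTri T l j y z = dD (lRes T l j) p q := by
  obtain ⟨p, hp, rfl⟩ := hy
  obtain ⟨q, hq, rfl⟩ := hz
  refine Set.Nonempty.csInf_mem (s := {r | ∃ x' ∈ Dtri, ∃ y' ∈ Dtri, T.σ j x' = T.σ j p ∧
    T.σ j y' = T.σ j q ∧ r = dD (lRes T l j) x' y'}) ⟨_, p, hp, q, hq, rfl, rfl, rfl⟩ ?_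
  refine ((T.finite_fiber j (T.σ j p)).image2 (dD (lRes T l j))
    (T.finite_fiber j (T.σ j q))).subset ?_
  rintro _ ⟨x', hx', y', hy', hx, hy, rfl⟩
  exact mem_image2_of_mem ⟨hx', hx⟩ ⟨hy', hy⟩

theorem chainSums_induction {P : S → ℝ → Prop} (hnil : P y 0)
    (hsnoc : ∀ j s t r, s ∈ T.σ j '' Dtri → t ∈ T.σ j '' Dtri → P s r →
      P t (r + dTri T l j s t)) {r : ℝ} (hr : r ∈ chainSums T l y z) : P z r := by
  obtain ⟨k, c, idx, rfl, rfl, hmem, rfl⟩ := hr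
  induction k with
  | zero => simpa using hnil
  | succ k ih =>
    rw [Finset.sum_range_succ]
    obtain ⟨hs, ht⟩ := hmem k k.lt_succ_self
    exact hsnoc _ _ _ _ hs ht (ih fun m hm ↦ hmem m (hm.trans k.lt_succ_self))

theorem nonneg_of_mem_chainSums {r : ℝ} (hr : r ∈ chainSums T l y z) : 0 ≤ r :=
  chainSums_induction (P := fun _ r ↦ 0 ≤ r) le_rfl
    (fun j s t _ _ _ hr ↦ add_nonneg hr (dTri_nonneg j s t)) hr

theorem dTri_mem_chainSums (hy : y ∈ T.σ j '' Dtri) (hz : z ∈ T.σ j '' Dtri) :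
    dTri T l j y z ∈ chainSums T l y z :=
  ⟨1, fun m ↦ if m = 0 then y else z, fun _ ↦ j, rfl, rfl, fun m hm ↦ by
    obtain rfl : m = 0 := by omega
    exact ⟨hy, hz⟩, by simp⟩

theorem chainSums_subset_chainSums_swap (y z : S) : chainSums T l y z ⊆ chainSums T l z y := by
  rintro _ ⟨k, c, idx, rfl, rfl, hmem, rfl⟩
  have hsub (m : ℕ) (hm : m < k) : k - m = k - 1 - m + 1 ∧ k - (m + 1) = k - 1 - m := by omega
  refine ⟨k, fun m ↦ c (k - m), fun m ↦ idx (k - 1 - m), by simp, by simp, fun m hm ↦ ?_, ?_⟩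
  · simp only [hsub m hm]
    exact (hmem _ (by omega)).symm
  · rw [← Finset.sum_range_reflect]
    refine Finset.sum_congr rfl fun m hm ↦ ?_
    simp only [hsub m (Finset.mem_range.1 hm)]
    exact dTri_comm ..

theorem dGlue_comm (y z : S) : dGlue T l y z = dGlue T l z y :=
  congr_arg sInf ((chainSums_subset_chainSums_swap y z).antisymm
    (chainSums_subset_chainSums_swap z y))

theorem dGlue_le_dD (hp : p ∈ Dtri) (hq : q ∈ Dtri) :
    dGlue T l (T.σ j p) (T.σ j q) ≤ dD (lRes T l j) p q :=
  (csInf_le ⟨0, fun _ ↦ nonneg_of_mem_chainSums⟩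
    (dTri_mem_chainSums (mem_image_of_mem _ hp) (mem_image_of_mem _ hq))).trans (dTri_le_dD hp hq)

/-- Along the chain one keeps a single straight segment from a preimage of `z`. Being shorter than
`ε`, it lies in every proper face containing its end, so it passes isometrically into the triangle
of the next link. -/
theorem TriIneqT.exists_dD_le_of_mem_chainSums (hl : TriIneqT T l) {ε r : ℝ}
    (hε : ∀ k, ∀ x, x ∈ Dtri ∧ T.σ k x = z → ∀ F ∈ properFaces, ∀ q ∈ F,
      dD (lRes T l k) x q < ε → x ∈ F)
    (hr : r ∈ chainSums T l z y) (hrε : r < ε) (hq : q ∈ Dtri) (hqy : T.σ k q = y) :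
    ∃ x ∈ Dtri, T.σ k x = z ∧ dD (lRes T l k) x q ≤ r := by
  refine chainSums_induction (P := fun s r ↦ r < ε → ∀ k, ∀ q ∈ Dtri, T.σ k q = s →
    ∃ x ∈ Dtri, T.σ k x = z ∧ dD (lRes T l k) x q ≤ r) ?_ ?_ hr hrε k q hq hqy
  · exact fun _ k q hq hqz ↦ ⟨q, hq, hqz, (dD_self _ q).le⟩
  · intro j s t r hs ht ih hlt k q hq hqt
    obtain ⟨a, ha, b, hb, rfl, hbt, hd⟩ := exists_dTri_eq_dD (l := l) hs ht
    rw [hd] at hlt ⊢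
    obtain ⟨x, hx, hxz, hxa⟩ :=
      ih ((le_add_of_nonneg_right (dD_nonneg ..)).trans_lt hlt) j a ha rfl
    have hxb : dD (lRes T l j) x b ≤ r + dD (lRes T l j) a b :=
      (dD_triangle _ x a b).trans (by gcongr)
    obtain ⟨x', hx', hσ, hdD⟩ := hl.exists_dD_eq_of_σ_eq hx hb hq (hbt.trans hqt.symm)
      fun F hF hbF ↦ hε j x ⟨hx, hxz⟩ F hF b hbF (hxb.trans_lt hlt)
    exact ⟨x', hx', hσ.trans hxz, hdD.trans_le hxb⟩

theorem TriIneqT.exists_pos_dD_le_dGlue (hl : TriIneqT T l) {i : Fin n} (hx : x ∈ Dtri) :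
    ∃ ε > 0, ∀ y ∈ Dtri, dD (lRes T l i) x y < ε →
      dD (lRes T l i) x y ≤ dGlue T l (T.σ i x) (T.σ i y) := by
  obtain ⟨ε, hpos, hε⟩ := hl.exists_pos_forall_mem_of_dD_lt (properFaces_finite.insert {x})
    (forall_mem_insert.2 ⟨isClosed_singleton, fun _ ↦ isClosed_of_mem_properFaces⟩) (T.σ i x)
  refine ⟨ε / 2, half_pos hpos, fun y hy hxy ↦ le_csInf ⟨_, dTri_mem_chainSums
    (mem_image_of_mem _ hx) (mem_image_of_mem _ hy)⟩ fun r hr ↦ ?_⟩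
  rcases le_or_gt (ε / 2) r with hrε | hrε
  · exact hxy.le.trans hrε
  · obtain ⟨x', hx', hσ, hd⟩ := hl.exists_dD_le_of_mem_chainSums
      (fun k w hw F hF ↦ hε k w hw F (.inr hF)) hr (hrε.trans (half_lt_self hpos)) hy rfl
    have hx'x : dD (lRes T l i) x' x < ε :=
      calc dD (lRes T l i) x' x ≤ dD (lRes T l i) x' y + dD (lRes T l i) y x := dD_triangle ..
        _ < ε / 2 + ε / 2 := add_lt_add (hd.trans_lt hrε) (dD_comm _ x y ▸ hxy)
        _ = ε := add_halves ε
    obtain rfl : x' = x := hε i x' ⟨hx', hσ⟩ {x} (.inl rfl) x rfl hx'x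
    exact hd

end Gluing

theorem pathLen_dGlue_eq_general (T : Triangulation S n) (l : Set S → ℝ) (hl : TriIneqT T l)
    (i : Fin n) (γ : ℝ → E2) (hγ : ContinuousOn γ (Icc (0 : ℝ) 1))
    (hD : ∀ t ∈ Icc (0 : ℝ) 1, γ t ∈ Dtri) :
    pathLen (dD (lRes T l i)) γ = pathLen (dGlue T l) (T.σ i ∘ γ) := by
  refine le_antisymm (pathLen_le_of_eventually_le (fun x ↦ (dD_self _ x).le) (dD_triangle _)
    fun s hs ↦ ?_) (pathLen_mono fun s hs t ht ↦ dGlue_le_dD (hD s hs) (hD t ht))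
  obtain ⟨ε, hpos, hε⟩ := hl.exists_pos_dD_le_dGlue (i := i) (hD s hs)
  have hnear : ∀ᶠ t in 𝓝[Icc 0 1] s, dD (lRes T l i) (γ s) (γ t) < ε :=
    ((continuous_dD _ (γ s)).continuousAt.comp_continuousWithinAt (hγ s hs)).eventually_lt_const
      ((dD_self _ (γ s)).trans_lt hpos)
  filter_upwards [hnear, self_mem_nhdsWithin] with t hlt ht
  have hle := hε (γ t) (hD t ht) hlt
  exact ⟨hle, by simpa only [dD_comm _ (γ t), dGlue_comm (T.σ i (γ t)), Function.comp] using hle⟩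

/-- Theorem 4.1 (a): for every `i ∈ I` and every continuous curve
`γ : [0,1] → Dtri`, the length of `γ` in `(Dtri, d[l^{(i)}])` equals the length of
`σᵢ ∘ γ` in `(S, d[l])`. -/
theorem pathLen_dGlue_eq
    {S : Type} [TopologicalSpace S] [CompactSpace S] [T2Space S] [ConnectedSpace S]
    {n : ℕ} (T : Triangulation S n) (l : Set S → ℝ) (hl : TriIneqT T l) (i : Fin n) :
    ∀ γ : ℝ → E2, ContinuousOn γ (Icc (0:ℝ) 1) → (∀ t ∈ Icc (0:ℝ) 1, γ t ∈ Dtri) →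
      pathLen (dD (lRes T l i)) γ = pathLen (dGlue T l) (T.σ i ∘ γ) :=
  pathLen_dGlue_eq_general T l hl i
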